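/- arXiv:1711.00532 — 5 statements merged into one kernel-verified Lean document; each statement's English description precedes it below -/
import Mathlib

section
/- Let T be a finset of trips, D ⊆ T, σ : α → α injective on D with σ '' D ⊆ T, and b : α → ℝ with b t < b (σ t) for every t ∈ D. Then every trip lies on exactly one bus: for each t ∈ T there exist a unique trip s ∈ T \ (D.image σ) and a natural number n such that σ^[k] s ∈ D for all k < n and σ^[n] s = t. -/
/-- In a bus schedule whose successor map strictly increases a time label, every trip
lies on exactly one bus: it is reached from a unique first trip (a trip with no
predecessor) by iterating the successor map. -/
theorem every_trip_on_unique_bus {α : Type*} [DecidableEq α]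
    (T D : Finset α) (σ : α → α) (b : α → ℝ)
    (hDT : D ⊆ T)
    (hinj : Set.InjOn σ ↑D)
    (hmap : ∀ t ∈ D, σ t ∈ T)
    (hb : ∀ t ∈ D, b t < b (σ t)) :
    ∀ t ∈ T, ∃! s, s ∈ T \ D.image σ ∧
      ∃ n : ℕ, (∀ k < n, σ^[k] s ∈ D) ∧ σ^[n] s = t := by
  have key : ∀ m : ℕ, ∀ t ∈ T, (T.filter (fun x => b x < b t)).card = m →
      ∃! s, s ∈ T \ D.image σ ∧
        ∃ n : ℕ, (∀ k < n, σ^[k] s ∈ D) ∧ σ^[n] s = t := by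
    intro m
    induction m using Nat.strong_induction_on with
    | _ m ih =>
      intro t ht hm
      by_cases him : t ∈ D.image σ
      · obtain ⟨u, hu, rfl⟩ := Finset.mem_image.mp him
        have hlt : (T.filter (fun x => b x < b u)).card < m := by
          rw [← hm]
          apply Finset.card_lt_card
          rw [Finset.ssubset_iff_of_subset]
          · exact ⟨u, by simp [hDT hu, hb u hu], by simp⟩
          · intro x hx
            rw [Finset.mem_filter] at hx ⊢
            exact ⟨hx.1, hx.2.trans (hb u hu)⟩
        obtain ⟨s, ⟨hs, n, hn, hnu⟩, huniq⟩ := ih _ hlt u (hDT hu) rfl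
        refine ⟨s, ⟨hs, n + 1, ?_, ?_⟩, ?_⟩
        · intro k hk
          rcases Nat.lt_succ_iff_lt_or_eq.mp hk with h | h
          · exact hn k h
          · rw [h, hnu]; exact hu
        · rw [Function.iterate_succ_apply', hnu]
        · rintro s' ⟨hs', n', hn', hnu'⟩
          cases n' with
          | zero =>
            have h0 : s' = σ u := hnu'
            rw [h0] at hs'
            exact absurd him (Finset.mem_sdiff.mp hs').2
          | succ n' =>
            rw [Function.iterate_succ_apply'] at hnu'
            exact huniq s' ⟨hs', n', fun k hk => hn' k (by omega),
              hinj (hn' n' (by omega)) hu hnu'⟩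
      · refine ⟨t, ⟨Finset.mem_sdiff.mpr ⟨ht, him⟩, 0, by simp, rfl⟩, ?_⟩
        rintro s' ⟨hs', n', hn', hnu'⟩
        cases n' with
        | zero => exact hnu'
        | succ n' =>
          rw [Function.iterate_succ_apply'] at hnu'
          exact absurd (Finset.mem_image.mpr ⟨_, hn' n' (by omega), hnu'⟩) him
  exact fun t ht => key _ t ht rfl
end

section
/- Suppose tt t > 0 for every trip t and dd t1 t2 ≥ 0 for all trips t1, t2. Let f : Fin (m + 1) → α be a chain of trips served consecutively by one bus, i.e., f i is compatible with f (i + 1) for every i < m. Then for all i < j, sb (O (f i)) < sb (O (f j)); in particular f is injective and O ∘ f is injective, so a single bus serves at most one trip of each school and the chain length m + 1 is at most the number of schools when K is finite. -/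
/-- Along a chain of consecutively compatible trips served by one bus, school bell
times strictly increase; hence the chain visits pairwise distinct trips and pairwise
distinct schools, so its length is at most the number of schools when `K` is finite. -/
theorem bus_chain_strictly_increasing {α K : Type*} [Fintype K]
    (O : α → K) (sb : K → ℝ) (tt : α → ℝ) (dd : α → α → ℝ)
    (htt : ∀ t, 0 < tt t)
    (hdd : ∀ t1 t2, 0 ≤ dd t1 t2)
    (m : ℕ) (f : Fin (m + 1) → α)
    (hchain : ∀ i : Fin m,
      sb (O (f i.castSucc)) + tt (f i.castSucc) + dd (f i.castSucc) (f i.succ)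
        ≤ sb (O (f i.succ))) :
    (∀ i j : Fin (m + 1), i < j → sb (O (f i)) < sb (O (f j))) ∧
    Function.Injective f ∧
    Function.Injective (O ∘ f) ∧
    m + 1 ≤ Fintype.card K := by
  have hmono : StrictMono (fun i => sb (O (f i))) := by
    rw [Fin.strictMono_iff_lt_succ]
    intro i
    have h1 := hchain i
    have h2 := htt (f i.castSucc)
    have h3 := hdd (f i.castSucc) (f i.succ)
    show sb (O (f i.castSucc)) < sb (O (f i.succ))
    linarith
  have hO : Function.Injective (O ∘ f) := fun a b h =>
    hmono.injective (congrArg sb h)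
  refine ⟨fun i j hij => hmono hij, hO.of_comp, hO, ?_⟩
  simpa using Fintype.card_le_of_injective _ hO
end

section
/- Suppose tt t > 0 for every trip t and dd t1 t2 ≥ 0 for all trips t1, t2. Let T be a finset of trips, D ⊆ T, and σ : α → α injective on D with σ '' D ⊆ T such that every t ∈ D is compatible with σ t. Then for every real number b, card T − card D ≥ card {t ∈ T : sb (O t) = b}. (The number of buses is at least the number of trips whose schools share any fixed bell time, since such trips are pairwise incompatible and must be served by distinct buses.) -/
/-- The number of buses `card T − card D` of a feasible schedule is at least the number
of trips of `T` whose schools share any fixed bell time `b`, since such trips are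
pairwise incompatible and must be served by distinct buses. -/
theorem buses_ge_trips_with_common_bell_time {α K : Type*} [DecidableEq α]
    (O : α → K) (sb : K → ℝ) (tt : α → ℝ) (dd : α → α → ℝ)
    (htt : ∀ t, 0 < tt t)
    (hdd : ∀ t1 t2, 0 ≤ dd t1 t2)
    (T D : Finset α) (σ : α → α)
    (hDT : D ⊆ T)
    (hinj : Set.InjOn σ ↑D)
    (hmap : ∀ t ∈ D, σ t ∈ T)
    (hcomp : ∀ t ∈ D, sb (O t) + tt t + dd t (σ t) ≤ sb (O (σ t))) :
    ∀ b : ℝ, (T.filter fun t => sb (O t) = b).card ≤ T.card - D.card := by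
  intro b
  have h1 : (D.filter fun t => sb (O t) < b).card ≤ (T.filter fun t => sb (O t) < b).card :=
    Finset.card_le_card (Finset.filter_subset_filter _ hDT)
  have h2 : (D.filter fun t => ¬ sb (O t) < b).card ≤ (T.filter fun t => b < sb (O t)).card := by
    apply Finset.card_le_card_of_injOn σ
    · intro t ht
      have ht' := Finset.mem_filter.1 (Finset.mem_coe.1 ht)
      refine Finset.mem_coe.2 (Finset.mem_filter.2 ⟨hmap t ht'.1, ?_⟩)
      have := hcomp t ht'.1
      have := htt t
      have := hdd t (σ t)
      have := not_lt.1 ht'.2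
      linarith
    · exact hinj.mono (fun t ht => (Finset.mem_filter.1 (Finset.mem_coe.1 ht)).1)
  have h3 := Finset.card_filter_add_card_filter_not (s := D) (fun t => sb (O t) < b)
  have h4 : (T.filter fun t => sb (O t) < b).card + (T.filter fun t => b < sb (O t)).card
      + (T.filter fun t => sb (O t) = b).card ≤ T.card := by
    rw [← Finset.card_union_of_disjoint, ← Finset.card_union_of_disjoint]
    · apply Finset.card_le_card
      intro t ht
      simp only [Finset.mem_union, Finset.mem_filter] at ht
      tauto
    · rw [Finset.disjoint_left]
      intro t ht h
      simp only [Finset.mem_union, Finset.mem_filter] at ht h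
      rcases ht with ht | ht <;> linarith [ht.2, h.2]
    · rw [Finset.disjoint_left]
      intro t ht h
      simp only [Finset.mem_filter] at ht h
      linarith [ht.2, h.2]
  omega
end

section
/- Let T and D be finsets of trips with D ⊆ T, O : α → K the school assignment with K a decidable-equality type, and f : α → K a function assigning to each trip of D a successor school, such that (i) for every school k, card {t ∈ D : f t = k} ≤ card {t ∈ T : O t = k}, and (ii) f t ≠ O t for every t ∈ D. Then there exists a function σ : α → α that is injective on D, maps D into T, and satisfies O (σ t) = f t and σ t ≠ t for every t ∈ D. (Any capacity-respecting trip-to-school assignment can be realized as an actual trip-to-trip bus schedule.) -/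
/-- Any capacity-respecting trip-to-school assignment `f` on `D` (no school receives
more preceding trips than it has trips in `T`, and no trip is assigned its own school)
can be realized as an actual trip-to-trip bus schedule: an injective successor map `σ`
into `T` with `O (σ t) = f t` and `σ t ≠ t` on `D`. -/
theorem trip_to_school_realizable {α K : Type*} [DecidableEq α] [DecidableEq K]
    (T D : Finset α) (O : α → K) (f : α → K)
    (hDT : D ⊆ T)
    (hcard : ∀ k : K, (D.filter fun t => f t = k).card ≤ (T.filter fun t => O t = k).card)
    (hne : ∀ t ∈ D, f t ≠ O t) :
    ∃ σ : α → α, Set.InjOn σ ↑D ∧ (∀ t ∈ D, σ t ∈ T) ∧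
      (∀ t ∈ D, O (σ t) = f t) ∧ (∀ t ∈ D, σ t ≠ t) := by
  have h : ∀ k : K, Nonempty ({x // x ∈ D.filter fun t => f t = k} ↪
      {x // x ∈ T.filter fun t => O t = k}) := fun k =>
    Function.Embedding.nonempty_of_card_le (by simpa only [Fintype.card_coe] using hcard k)
  have g := fun k => Classical.choice (h k)
  have hm : ∀ t, t ∈ D → t ∈ D.filter fun s => f s = f t := fun t ht => by simp [ht]
  let σ : α → α := fun t => if ht : t ∈ D then (g (f t) ⟨t, hm t ht⟩ : α) else t
  have hσ : ∀ t (ht : t ∈ D), σ t = (g (f t) ⟨t, hm t ht⟩ : α) := fun t ht => dif_pos ht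
  have hT : ∀ t ∈ D, σ t ∈ T ∧ O (σ t) = f t := fun t ht => by
    rw [hσ t ht]
    exact Finset.mem_filter.1 (g (f t) ⟨t, hm t ht⟩).2
  have key : ∀ (k l : K) (a b : α) (ha : a ∈ D.filter fun s => f s = k)
      (hb : b ∈ D.filter fun s => f s = l), k = l →
      (g k ⟨a, ha⟩ : α) = (g l ⟨b, hb⟩ : α) → a = b := by
    intro k l a b ha hb hkl e
    subst hkl
    exact congrArg Subtype.val ((g k).injective (Subtype.ext e))
  refine ⟨σ, ?_, fun t ht => (hT t ht).1, fun t ht => (hT t ht).2, ?_⟩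
  · intro a ha b hb e
    have ha' : a ∈ D := ha
    have hb' : b ∈ D := hb
    have hf : f a = f b := by rw [← (hT a ha').2, ← (hT b hb').2, e]
    rw [hσ a ha', hσ b hb'] at e
    exact key _ _ a b _ _ hf e
  · intro t ht e
    have h2 := (hT t ht).2
    rw [e] at h2
    exact hne t ht h2.symm
end

section
/- Let T be a finset of trips, O : α → K with K a decidable-equality fintype, and compS : α → K → Prop a (decidable) trip-to-school compatibility relation satisfying ¬ compS t (O t) for every t ∈ T. Then the maximum, over subsets D ⊆ T admitting an injective map σ : D → T with compS t (O (σ t)) for all t ∈ D, of card D, equals the maximum, over subsets D ⊆ T admitting a function f : D → K with compS t (f t) for all t ∈ D and card {t ∈ D : f t = k} ≤ card {t ∈ T : O t = k} for every school k, of card D. Consequently the minimum number of buses needed to serve T equals card T minus the maximum total trip-to-school compatibility achievable under the per-school capacity constraint. -/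
theorem aux_inj {α : Type*} [DecidableEq α] (s t : Finset α) (h : s.card ≤ t.card) :
    ∃ g : α → α, Set.InjOn g ↑s ∧ ∀ x ∈ s, g x ∈ t := by
  have h' : Fintype.card s ≤ Fintype.card t := by simpa using h
  obtain ⟨e⟩ := Function.Embedding.nonempty_of_card_le h'
  refine ⟨fun x => if hx : x ∈ s then (e ⟨x, hx⟩ : α) else x, ?_, ?_⟩
  · intro x hx y hy hxy
    have hx' : x ∈ s := hx
    have hy' : y ∈ s := hy
    simp only [hx', hy', dif_pos] at hxy
    have := e.injective (Subtype.ext hxy)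
    exact congrArg Subtype.val this
  · intro x hx
    simp only [hx, dif_pos]
    exact (e ⟨x, hx⟩).2

theorem aux_iff {α K : Type*} [DecidableEq α] [DecidableEq K]
    (T D : Finset α) (O : α → K) (compS : α → K → Prop) :
    (∃ σ : α → α, Set.InjOn σ ↑D ∧ (∀ t ∈ D, σ t ∈ T) ∧ ∀ t ∈ D, compS t (O (σ t))) ↔
    (∃ f : α → K, (∀ t ∈ D, compS t (f t)) ∧
      ∀ k : K, (D.filter fun t => f t = k).card ≤ (T.filter fun t => O t = k).card) := by
  constructor
  · rintro ⟨σ, hi, hm, hc⟩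
    refine ⟨fun t => O (σ t), hc, fun k => ?_⟩
    apply Finset.card_le_card_of_injOn σ
    · intro x hx
      have hx' := Finset.mem_filter.1 hx
      exact Finset.mem_filter.2 ⟨hm x hx'.1, hx'.2⟩
    · intro x hx y hy hxy
      exact hi (Finset.mem_filter.1 hx).1 (Finset.mem_filter.1 hy).1 hxy
  · rintro ⟨f, hc, hk⟩
    choose g hg hgm using fun k => aux_inj _ _ (hk k)
    have key : ∀ t ∈ D, g (f t) t ∈ T ∧ O (g (f t) t) = f t := fun t ht =>
      Finset.mem_filter.1 (hgm (f t) t (Finset.mem_filter.2 ⟨ht, rfl⟩))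
    refine ⟨fun t => g (f t) t, ?_, fun t ht => (key t ht).1, fun t ht => ?_⟩
    · intro x hx y hy hxy
      have hf : f x = f y := by
        rw [← (key x hx).2, ← (key y hy).2]
        exact congrArg O hxy
      apply hg (f y) (Finset.mem_coe.2 (Finset.mem_filter.2 ⟨hx, hf⟩))
        (Finset.mem_coe.2 (Finset.mem_filter.2 ⟨hy, rfl⟩))
      simpa [hf] using hxy
    · rw [(key t ht).2]
      exact hc t ht

/-- Equivalence of the trip-to-trip and trip-to-school formulations: over subsets
`D ⊆ T`, the maximum cardinality of a `D` admitting an injective successor map `σ`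
into `T` with each successor's school compatible equals the maximum cardinality of a
`D` admitting a compatible trip-to-school assignment respecting the per-school capacity
constraint (37).  Consequently the minimum number of buses needed to serve `T` equals
`card T` minus the maximum trip-to-school compatibility. -/
theorem trip_to_trip_max_eq_trip_to_school_max {α K : Type*}
    [DecidableEq α] [DecidableEq K] [Fintype K]
    (T : Finset α) (O : α → K) (compS : α → K → Prop)
    [∀ t k, Decidable (compS t k)]
    (hself : ∀ t ∈ T, ¬ compS t (O t)) :
    (sSup {n : ℕ | ∃ D : Finset α, D ⊆ T ∧ D.card = n ∧
        ∃ σ : α → α, Set.InjOn σ ↑D ∧ (∀ t ∈ D, σ t ∈ T) ∧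
          ∀ t ∈ D, compS t (O (σ t))}
      = sSup {n : ℕ | ∃ D : Finset α, D ⊆ T ∧ D.card = n ∧
        ∃ f : α → K, (∀ t ∈ D, compS t (f t)) ∧
          ∀ k : K, (D.filter fun t => f t = k).card ≤ (T.filter fun t => O t = k).card}) ∧
    (sInf {n : ℕ | ∃ D : Finset α, D ⊆ T ∧ n = T.card - D.card ∧
        ∃ σ : α → α, Set.InjOn σ ↑D ∧ (∀ t ∈ D, σ t ∈ T) ∧
          ∀ t ∈ D, compS t (O (σ t))}
      = T.card - sSup {n : ℕ | ∃ D : Finset α, D ⊆ T ∧ D.card = n ∧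
        ∃ f : α → K, (∀ t ∈ D, compS t (f t)) ∧
          ∀ k : K, (D.filter fun t => f t = k).card ≤ (T.filter fun t => O t = k).card}) := by
  simp only [aux_iff, true_and]
  set P : Finset α → Prop := fun D => ∃ f : α → K, (∀ t ∈ D, compS t (f t)) ∧
    ∀ k : K, (D.filter fun t => f t = k).card ≤ (T.filter fun t => O t = k).card with hP
  change sInf {n : ℕ | ∃ D : Finset α, D ⊆ T ∧ n = T.card - D.card ∧ P D} =
    T.card - sSup {n : ℕ | ∃ D : Finset α, D ⊆ T ∧ D.card = n ∧ P D}
  by_cases hK : Nonempty (α → K)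
  · obtain ⟨f0⟩ := hK
    have hb : BddAbove {n : ℕ | ∃ D : Finset α, D ⊆ T ∧ D.card = n ∧ P D} := by
      refine ⟨T.card, ?_⟩
      rintro n ⟨D, hD, rfl, -⟩
      exact Finset.card_le_card hD
    have hne : {n : ℕ | ∃ D : Finset α, D ⊆ T ∧ D.card = n ∧ P D}.Nonempty :=
      ⟨0, ∅, by simp, by simp, f0, by simp, by simp⟩
    obtain ⟨D, hD, hc, hPD⟩ := Nat.sSup_mem hne hb
    apply le_antisymm
    · exact Nat.sInf_le ⟨D, hD, by rw [hc], hPD⟩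
    · refine le_csInf ⟨_, D, hD, rfl, hPD⟩ ?_
      rintro n ⟨E, hE, rfl, hPE⟩
      exact Nat.sub_le_sub_left (le_csSup hb ⟨E, hE, rfl, hPE⟩) _
  · exact absurd ⟨O⟩ hK
end
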